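/- Let n ≥ 1. Let a ∈ 𝒮(ℝⁿ) be real-valued and even (a(−x) = a(x) for all x) with ‖a‖_{L²(ℝⁿ)} = 1, and for ε ∈ (0,1] set a_ε(x) = ε^{−n/4} a(ε^{−1/2} x). Let σ ∈ 𝒮(ℝⁿ×ℝⁿ) vanish for x outside some compact set, and set σ_ε(x,ξ) = σ(x, εξ). Then there exists a constant C > 0 such that for all ε ∈ (0,1] and all f ∈ 𝒮(ℝⁿ): ‖Op^{KN}(σ_ε)f − Op^{Wick,a_ε}(σ_ε)f‖_{L²(ℝⁿ)} ≤ C ε ‖f‖_{L²(ℝⁿ)}. (Euclidean instance of Corollary 5.2: the semiclassical Kohn–Nirenberg and Wick quantizations differ by O(ε) in operator norm.) -/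

import Mathlib

open MeasureTheory Complex

noncomputable section

/-- `e^{2πit}`. -/
def expi (t : ℝ) : ℂ := Complex.exp (2 * (Real.pi : ℂ) * Complex.I * (t : ℂ))

/-- Dot product on `ℝⁿ`. -/
def dotp {n : ℕ} (x y : Fin n → ℝ) : ℝ := ∑ i, x i * y i

/-- Euclidean Fourier transform `𝓕f(ξ) = ∫ f(y) e^{-2πi y·ξ} dy`. -/
def FT {n : ℕ} (f : (Fin n → ℝ) → ℂ) (ξ : Fin n → ℝ) : ℂ :=
  ∫ y, f y * expi (-(dotp y ξ))

/-- Bargmann-type transform `B_a[f](x,ξ) = ∫ f(y) a(y-x) e^{-2πi y·ξ} dy`. -/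
def Barg {n : ℕ} (a f : (Fin n → ℝ) → ℂ) (x ξ : Fin n → ℝ) : ℂ :=
  ∫ y, f y * a (y - x) * expi (-(dotp y ξ))

/-- Wick quantization with window `a`. -/
def WickOp {n : ℕ} (a : (Fin n → ℝ) → ℂ) (σ : (Fin n → ℝ) → (Fin n → ℝ) → ℂ)
    (f : (Fin n → ℝ) → ℂ) (y : Fin n → ℝ) : ℂ :=
  ∫ p : (Fin n → ℝ) × (Fin n → ℝ),
    σ p.1 p.2 * Barg a f p.1 p.2 * (starRingEnd ℂ) (a (y - p.1)) * expi (dotp y p.2)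

/-- Kohn–Nirenberg quantization. -/
def OpKN {n : ℕ} (σ : (Fin n → ℝ) → (Fin n → ℝ) → ℂ) (f : (Fin n → ℝ) → ℂ)
    (x : Fin n → ℝ) : ℂ :=
  ∫ ξ, expi (dotp x ξ) * σ x ξ * FT f ξ

/-- Partial derivative in the `i`-th coordinate direction. -/
def pd {n : ℕ} (i : Fin n) (F : (Fin n → ℝ) → ℂ) : (Fin n → ℝ) → ℂ :=
  fun x => fderiv ℝ F x (Pi.single i 1)

/-- Multi-index derivative `∂^α`. -/
def md {n : ℕ} (α : Fin n → ℕ) (F : (Fin n → ℝ) → ℂ) : (Fin n → ℝ) → ℂ :=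
  (((List.finRange n).map fun i => (pd i)^[α i]).foldr (· ∘ ·) id) F

/-- Mixed derivative `∂_x^β ∂_ξ^α σ`. -/
def mixedD {n : ℕ} (β α : Fin n → ℕ) (σ : (Fin n → ℝ) → (Fin n → ℝ) → ℂ) :
    (Fin n → ℝ) → (Fin n → ℝ) → ℂ :=
  fun x ξ => md β (fun x' => md α (fun ξ' => σ x' ξ') ξ) x

/-- The weight `1 + |ξ|²` (Euclidean norm squared). -/
def wt {n : ℕ} (ξ : Fin n → ℝ) : ℝ := 1 + ∑ i, ξ i ^ 2

/-- Length `|α|` of a multi-index, as a real number. -/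
def mOrd {n : ℕ} (α : Fin n → ℕ) : ℝ := ∑ i, (α i : ℝ)

/-- The Hörmander class `S^m_{ρ,δ}(ℝⁿ)`. -/
def SymbolClass {n : ℕ} (m ρ δ : ℝ) (σ : (Fin n → ℝ) → (Fin n → ℝ) → ℂ) : Prop :=
  (ContDiff ℝ (⊤ : ℕ∞) fun p : (Fin n → ℝ) × (Fin n → ℝ) => σ p.1 p.2) ∧
  ∀ α β : Fin n → ℕ, ∃ C > 0, ∀ x ξ,
    ‖mixedD β α σ x ξ‖ ≤ C * wt ξ ^ ((m - ρ * mOrd α + δ * mOrd β) / 2)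

/-- The seminorm `‖σ‖_{S^m_{ρ,δ},α,β}`. -/
def hSem {n : ℕ} (m ρ δ : ℝ) (α β : Fin n → ℕ)
    (σ : (Fin n → ℝ) → (Fin n → ℝ) → ℂ) : ℝ :=
  ⨆ p : (Fin n → ℝ) × (Fin n → ℝ),
    wt p.2 ^ (-(m - ρ * mOrd α + δ * mOrd β) / 2) * ‖mixedD β α σ p.1 p.2‖

/-- Squared Sobolev norm `‖f‖²_{H^s}`. -/
def sobSq {n : ℕ} (s : ℝ) (f : (Fin n → ℝ) → ℂ) : ℝ :=
  ∫ ξ, wt ξ ^ s * ‖FT f ξ‖ ^ 2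

end

noncomputable section WickKN

open scoped SchwartzMap LineDeriv

variable {n : ℕ}

lemma norm_expi (t : ℝ) : ‖expi t‖ = 1 := by
  unfold expi
  have : 2 * (Real.pi : ℂ) * Complex.I * (t : ℂ) = ((2 * Real.pi * t : ℝ) : ℂ) * Complex.I := by
    push_cast; ring
  rw [this, Complex.norm_exp_ofReal_mul_I]

lemma expi_add (s t : ℝ) : expi (s + t) = expi s * expi t := by
  unfold expi
  rw [← Complex.exp_add]
  congr 1
  push_cast; ring

lemma continuous_expi : Continuous expi := by
  unfold expi; fun_prop

lemma continuous_dotp : Continuous fun p : (Fin n → ℝ) × (Fin n → ℝ) => dotp p.1 p.2 := by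
  unfold dotp; fun_prop

@[fun_prop]
lemma continuous_expi_dotp {X : Type*} [TopologicalSpace X] {f g : X → Fin n → ℝ}
    (hf : Continuous f) (hg : Continuous g) : Continuous fun x => expi (dotp (f x) (g x)) :=
  continuous_expi.comp (continuous_dotp.comp (hf.prodMk hg))

/-- integrable weight -/
def wgt (ξ : Fin n → ℝ) : ℝ := ((1 + ‖ξ‖) ^ (n + 1))⁻¹

lemma wgt_pos (ξ : Fin n → ℝ) : 0 < wgt ξ := by unfold wgt; positivity

lemma integrable_wgt : Integrable (wgt : (Fin n → ℝ) → ℝ) := by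
  have := integrable_one_add_norm (E := Fin n → ℝ) (μ := volume) (r := (n + 1 : ℕ)) (by simp)
  refine this.congr (Filter.Eventually.of_forall fun x => ?_)
  simp only [wgt]
  rw [Real.rpow_neg (by positivity), Real.rpow_natCast]

lemma schw_bound {V F : Type*} [NormedAddCommGroup V] [NormedSpace ℝ V] [NormedAddCommGroup F]
    [NormedSpace ℝ F] (T : 𝓢(V, F)) (M : ℕ) : ∃ C ≥ 0, ∀ p, (1 + ‖p‖) ^ M * ‖T p‖ ≤ C := by
  have h : ∀ p, (1 + ‖p‖) ^ M * ‖T p‖ ≤ _ := fun p => by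
    simpa only [norm_iteratedFDeriv_zero] using
      SchwartzMap.one_add_le_sup_seminorm_apply (𝕜 := ℝ) (m := (M, 0)) (k := M) (n := 0)
        le_rfl le_rfl T p
  exact ⟨_, le_trans (by positivity) (h 0), h⟩

lemma schw_bound' {F : Type*} [NormedAddCommGroup F]
    [NormedSpace ℝ F] (T : 𝓢((Fin n → ℝ) × (Fin n → ℝ), F)) :
    ∃ C ≥ 0, ∀ x ξ, ‖T (x, ξ)‖ ≤ C * wgt ξ := by
  obtain ⟨C, hC, h⟩ := schw_bound T (n + 1)
  refine ⟨C, hC, fun x ξ => ?_⟩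
  have h1 := h (x, ξ)
  unfold wgt
  rw [← div_eq_mul_inv, le_div_iff₀ (by positivity), mul_comm]
  refine le_trans ?_ h1
  gcongr
  exact le_max_right _ _

lemma schw_diff {F : Type*} [NormedAddCommGroup F]
    [NormedSpace ℝ F] (T : 𝓢((Fin n → ℝ) × (Fin n → ℝ), F)) :
    ∃ C ≥ 0, ∀ x y ξ, ‖T (x, ξ) - T (y, ξ)‖ ≤ C * wgt ξ * ‖x - y‖ := by
  obtain ⟨C, hC, h⟩ := schw_bound' (SchwartzMap.fderivCLM ℝ _ _ T)
  refine ⟨C, hC, fun x y ξ => ?_⟩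
  have hd : ∀ u : Fin n → ℝ, HasFDerivAt (fun x => T (x, ξ))
      ((fderiv ℝ T (u, ξ)).comp (ContinuousLinearMap.inl ℝ (Fin n → ℝ) (Fin n → ℝ))) u := by
    intro u
    exact (T.differentiableAt.hasFDerivAt (x := (u, ξ))).comp u (hasFDerivAt_prodMk_left u ξ)
  refine Convex.norm_image_sub_le_of_norm_hasFDerivWithin_le (𝕜 := ℝ)
    (f := fun x => T (x, ξ)) (s := Set.univ)
    (fun u _ => (hd u).hasFDerivWithinAt) (fun u _ => ?_) convex_univ trivial trivial
  refine (ContinuousLinearMap.opNorm_comp_le _ _).trans ?_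
  have h1 := h u ξ
  rw [SchwartzMap.fderivCLM_apply] at h1
  have h2 := ContinuousLinearMap.norm_inl_le_one ℝ (Fin n → ℝ) (Fin n → ℝ)
  calc _ ≤ ‖fderiv ℝ T (u, ξ)‖ * 1 := by gcongr
    _ ≤ _ := by simpa using h1

lemma schw_diff2 (T : 𝓢((Fin n → ℝ) × (Fin n → ℝ), ℂ)) :
    ∃ C ≥ 0, ∀ x h ξ, ‖T (x + h, ξ) + T (x - h, ξ) - 2 * T (x, ξ)‖ ≤ C * wgt ξ * ‖h‖ ^ 2 := by
  obtain ⟨C, hC, hT⟩ := schw_diff (SchwartzMap.fderivCLM ℝ _ _ T)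
  refine ⟨2 * C, by positivity, fun x h ξ => ?_⟩
  have hd : ∀ u : Fin n → ℝ, HasFDerivAt (fun x => T (x, ξ))
      ((fderiv ℝ T (u, ξ)).comp (ContinuousLinearMap.inl ℝ (Fin n → ℝ) (Fin n → ℝ))) u := by
    intro u
    exact (T.differentiableAt.hasFDerivAt (x := (u, ξ))).comp u (hasFDerivAt_prodMk_left u ξ)
  have hG : ∀ y : Fin n → ℝ, HasFDerivAt (fun y => T (x + y, ξ) + T (x - y, ξ))
      ((fderiv ℝ T (x + y, ξ) - fderiv ℝ T (x - y, ξ)).comp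
        (ContinuousLinearMap.inl ℝ (Fin n → ℝ) (Fin n → ℝ))) y := by
    intro y
    have h1 := (hd (x + y)).comp y ((hasFDerivAt_id y).const_add x)
    have h2 := (hd (x - y)).comp y ((hasFDerivAt_id y).const_sub x)
    refine (h1.add h2).congr_fderiv ?_
    ext v
    simp [sub_eq_add_neg]
  have key := Convex.norm_image_sub_le_of_norm_hasFDerivWithin_le (𝕜 := ℝ)
    (f := fun y => T (x + y, ξ) + T (x - y, ξ)) (s := Metric.closedBall 0 ‖h‖)
    (C := 2 * C * wgt ξ * ‖h‖) (x := 0) (y := h)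
    (fun u _ => (hG u).hasFDerivWithinAt) (fun u hu => ?_) (convex_closedBall _ _)
    (by simp) (by simp)
  · simp only [add_zero, sub_zero] at key
    rw [two_mul]
    refine key.trans (le_of_eq (by ring))
  · refine (ContinuousLinearMap.opNorm_comp_le _ _).trans ?_
    have h1 := hT (x + u) (x - u) ξ
    rw [SchwartzMap.fderivCLM_apply, SchwartzMap.fderivCLM_apply] at h1
    have h2 := ContinuousLinearMap.norm_inl_le_one ℝ (Fin n → ℝ) (Fin n → ℝ)
    have h3 : ‖x + u - (x - u)‖ ≤ 2 * ‖h‖ := by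
      have : x + u - (x - u) = (2 : ℝ) • u := by rw [two_smul]; abel
      rw [this, norm_smul]
      simp at hu ⊢
      exact hu
    have := wgt_pos ξ
    calc _ ≤ ‖fderiv ℝ T (x + u, ξ) - fderiv ℝ T (x - u, ξ)‖ * 1 := by gcongr
      _ ≤ C * wgt ξ * (2 * ‖h‖) := by rw [mul_one]; exact h1.trans (by gcongr)
      _ = _ := by ring

/-- partial inverse Fourier transform -/
def kk (τ : 𝓢((Fin n → ℝ) × (Fin n → ℝ), ℂ)) (x z : Fin n → ℝ) : ℂ :=
  ∫ ξ, τ (x, ξ) * expi (dotp z ξ)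

lemma kk_integrable (τ : 𝓢((Fin n → ℝ) × (Fin n → ℝ), ℂ)) (x z : Fin n → ℝ) :
    Integrable fun ξ => τ (x, ξ) * expi (dotp z ξ) := by
  obtain ⟨C, hC, h⟩ := schw_bound' τ
  refine (integrable_wgt.const_mul C).mono' (by fun_prop) (Filter.Eventually.of_forall fun ξ => ?_)
  rw [norm_mul, norm_expi, mul_one]
  exact h x ξ

lemma kk_base (τ : 𝓢((Fin n → ℝ) × (Fin n → ℝ), ℂ)) :
    ∃ C ≥ 0, ∀ x h z, ‖kk τ x z‖ ≤ C ∧ ‖kk τ (x + h) z - kk τ x z‖ ≤ C * ‖h‖ ∧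
      ‖kk τ (x + h) z + kk τ (x - h) z - 2 * kk τ x z‖ ≤ C * ‖h‖ ^ 2 := by
  obtain ⟨C0, hC0, h0⟩ := schw_bound' τ
  obtain ⟨C1, hC1, h1⟩ := schw_diff τ
  obtain ⟨C2, hC2, h2⟩ := schw_diff2 τ
  set I := ∫ ξ : Fin n → ℝ, wgt ξ with hI
  have hIn : 0 ≤ I := integral_nonneg fun x => (wgt_pos x).le
  have gen : ∀ (g : (Fin n → ℝ) → ℂ) (c : ℝ), (∀ ξ, ‖g ξ‖ ≤ c * wgt ξ) → ‖∫ ξ, g ξ‖ ≤ c * I := by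
    intro g c hg
    rw [hI, ← integral_const_mul]
    exact norm_integral_le_of_norm_le (integrable_wgt.const_mul c) (Filter.Eventually.of_forall hg)
  refine ⟨(C0 + C1 + C2) * I, by positivity, fun x h z => ⟨?_, ?_, ?_⟩⟩
  · refine (gen _ C0 fun ξ => ?_).trans (by gcongr; linarith)
    rw [norm_mul, norm_expi, mul_one]
    exact h0 x ξ
  · unfold kk
    rw [← integral_sub (kk_integrable _ _ _) (kk_integrable _ _ _)]
    refine (gen _ (C1 * ‖h‖) fun ξ => ?_).trans ?_
    · rw [← sub_mul, norm_mul, norm_expi, mul_one]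
      have := h1 (x + h) x ξ
      rw [add_sub_cancel_left] at this
      linarith
    · calc C1 * ‖h‖ * I = C1 * I * ‖h‖ := by ring
        _ ≤ _ := by gcongr; linarith
  · unfold kk
    rw [← integral_const_mul, ← integral_add (kk_integrable _ _ _) (kk_integrable _ _ _),
      ← integral_sub (by exact (kk_integrable _ _ _).add (kk_integrable _ _ _))
        ((kk_integrable _ _ _).const_mul 2)]
    refine (gen _ (C2 * ‖h‖ ^ 2) fun ξ => ?_).trans ?_
    · rw [← mul_assoc, ← add_mul, ← sub_mul, norm_mul, norm_expi, mul_one]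
      have := h2 x h ξ
      linarith
    · calc C2 * ‖h‖ ^ 2 * I = C2 * I * ‖h‖ ^ 2 := by ring
        _ ≤ _ := by gcongr; linarith

lemma hasFDerivAt_expi_dotp (z ξ v : Fin n → ℝ) :
    HasLineDerivAt ℝ (fun ξ => expi (dotp z ξ))
      (2 * (Real.pi : ℂ) * Complex.I * (dotp z v : ℂ) * expi (dotp z ξ)) ξ v := by
  have h1 : HasDerivAt (fun t : ℝ => dotp z (ξ + t • v)) (dotp z v) 0 := by
    have : (fun t : ℝ => dotp z (ξ + t • v)) = fun t => dotp z ξ + t * dotp z v := by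
      funext t
      simp only [dotp, Pi.add_apply, Pi.smul_apply, smul_eq_mul, Finset.mul_sum]
      rw [← Finset.sum_add_distrib]
      exact Finset.sum_congr rfl fun i _ => by ring
    rw [this]
    simpa using ((hasDerivAt_id (0 : ℝ)).mul_const (dotp z v)).const_add (dotp z ξ)
  have h2 := ((h1.ofReal_comp).const_mul (2 * (Real.pi : ℂ) * Complex.I)).cexp
  unfold HasLineDerivAt
  simp only [expi]
  convert! h2 using 1
  simp
  ring

lemma kk_ibp (τ : 𝓢((Fin n → ℝ) × (Fin n → ℝ), ℂ)) (x z v : Fin n → ℝ) :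
    kk (∂_{((0 : Fin n → ℝ), v)} τ) x z
      = -(2 * (Real.pi : ℂ) * Complex.I * (dotp z v : ℂ)) * kk τ x z := by
  have key := integral_bilinear_hasLineDerivAt_right_eq_neg_left_of_integrable
    (μ := (volume : Measure (Fin n → ℝ))) (v := v) (B := ContinuousLinearMap.mul ℝ ℂ)
    (f := fun ξ => τ (x, ξ)) (f' := fun ξ => (∂_{((0 : Fin n → ℝ), v)} τ) (x, ξ))
    (g := fun ξ => expi (dotp z ξ))
    (g' := fun ξ => 2 * (Real.pi : ℂ) * Complex.I * (dotp z v : ℂ) * expi (dotp z ξ))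
    (kk_integrable _ x z)
    (by
      refine ((kk_integrable τ x z).const_mul
        (2 * (Real.pi : ℂ) * Complex.I * (dotp z v : ℂ))).congr
        (Filter.Eventually.of_forall fun ξ => ?_)
      simp; ring)
    (kk_integrable _ x z) ?_ (fun ξ _ => hasFDerivAt_expi_dotp z ξ v)
  · simp only [ContinuousLinearMap.mul_apply'] at key
    unfold kk
    rw [eq_comm, neg_mul, neg_eq_iff_eq_neg, ← key, ← integral_const_mul]
    congr 1
    funext ξ
    ring
  · intro ξ _
    have h := τ.differentiableAt.hasFDerivAt (x := (x, ξ))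
    have h' := (h.comp ξ (hasFDerivAt_prodMk_right x ξ)).hasLineDerivAt v
    rw [SchwartzMap.lineDerivOp_apply_eq_fderiv]
    exact h'

lemma kk_coord (i : Fin n) (N : ℕ) : ∀ τ : 𝓢((Fin n → ℝ) × (Fin n → ℝ), ℂ),
    ∃ C ≥ 0, ∀ x h z, |z i| ^ N * ‖kk τ x z‖ ≤ C ∧
      |z i| ^ N * ‖kk τ (x + h) z - kk τ x z‖ ≤ C * ‖h‖ ∧
      |z i| ^ N * ‖kk τ (x + h) z + kk τ (x - h) z - 2 * kk τ x z‖ ≤ C * ‖h‖ ^ 2 := by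
  induction N with
  | zero => intro τ; simpa using kk_base τ
  | succ N ih =>
    intro τ
    obtain ⟨C, hC, hh⟩ := ih (∂_{((0 : Fin n → ℝ), (Pi.single i 1 : Fin n → ℝ))} τ)
    refine ⟨C, hC, fun x h z => ?_⟩
    have hd : dotp z (Pi.single i 1) = z i := by simp [dotp, Pi.single_apply]
    have e : ∀ x, kk (∂_{((0 : Fin n → ℝ), (Pi.single i 1 : Fin n → ℝ))} τ) x z
        = -(2 * (Real.pi : ℂ) * Complex.I * (z i : ℂ)) * kk τ x z := by
      intro x; rw [kk_ibp, hd]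
    have hn : ‖-(2 * (Real.pi : ℂ) * Complex.I * (z i : ℂ))‖ = 2 * Real.pi * |z i| := by
      simp [abs_of_pos Real.pi_pos]
    have hpi : 1 ≤ 2 * Real.pi := by have := Real.pi_gt_three; linarith
    have gen : ∀ w : ℂ, |z i| ^ (N + 1) * ‖w‖ ≤
        |z i| ^ N * ‖-(2 * (Real.pi : ℂ) * Complex.I * (z i : ℂ)) * w‖ := by
      intro w
      rw [norm_mul, hn, pow_succ]
      have : 0 ≤ |z i| ^ N * |z i| * ‖w‖ := by positivity
      nlinarith
    obtain ⟨a1, a2, a3⟩ := hh x h z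
    rw [e, e] at a2
    rw [e, e, e] at a3
    rw [e] at a1
    refine ⟨(gen _).trans a1, (gen _).trans ?_, (gen _).trans ?_⟩
    · rw [mul_sub]; exact a2
    · convert! a3 using 3; ring

lemma kk_bounds (N : ℕ) (τ : 𝓢((Fin n → ℝ) × (Fin n → ℝ), ℂ)) :
    ∃ C ≥ 0, ∀ x h z, (1 + ‖z‖) ^ N * ‖kk τ x z‖ ≤ C ∧
      (1 + ‖z‖) ^ N * ‖kk τ (x + h) z - kk τ x z‖ ≤ C * ‖h‖ ∧
      (1 + ‖z‖) ^ N * ‖kk τ (x + h) z + kk τ (x - h) z - 2 * kk τ x z‖ ≤ C * ‖h‖ ^ 2 := by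
  obtain ⟨C0, hC0, h0⟩ := kk_base τ
  choose C hC h using fun i => kk_coord (n := n) i N τ
  have hS : 0 ≤ ∑ i, C i := Finset.sum_nonneg fun i _ => hC i
  refine ⟨2 ^ N * (C0 + ∑ i, C i), by positivity, fun x k z => ?_⟩
  have gen : ∀ w B : ℝ, 0 ≤ w → 0 ≤ B → w ≤ C0 * B → (∀ i, |z i| ^ N * w ≤ C i * B) →
      (1 + ‖z‖) ^ N * w ≤ 2 ^ N * (C0 + ∑ i, C i) * B := by
    intro w B hw hB h1 h2
    by_cases hz : ‖z‖ ≤ 1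
    · calc (1 + ‖z‖) ^ N * w ≤ 2 ^ N * w := by gcongr; linarith
        _ ≤ 2 ^ N * (C0 * B) := by gcongr
        _ ≤ 2 ^ N * ((C0 + ∑ i, C i) * B) := by gcongr; linarith
        _ = _ := by ring
    · push Not at hz
      obtain ⟨i, hi⟩ : ∃ i, ‖z‖ = |z i| := by
        have hne : Nonempty (Fin n) := by
          by_contra hne
          rw [not_nonempty_iff] at hne
          rw [Subsingleton.elim z 0] at hz
          simp at hz
          linarith
        obtain ⟨i, hi⟩ := Finite.exists_max (fun i => ‖z i‖)
        refine ⟨i, le_antisymm ?_ (norm_le_pi_norm z i)⟩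
        exact (pi_norm_le_iff_of_nonneg (norm_nonneg _)).2 hi
      calc (1 + ‖z‖) ^ N * w ≤ (2 * ‖z‖) ^ N * w := by gcongr; linarith
        _ = 2 ^ N * (|z i| ^ N * w) := by rw [mul_pow, hi]; ring
        _ ≤ 2 ^ N * (C i * B) := mul_le_mul_of_nonneg_left (h2 i) (by positivity)
        _ ≤ 2 ^ N * ((C0 + ∑ i, C i) * B) := by
          gcongr
          have := Finset.single_le_sum (fun i _ => hC i) (Finset.mem_univ i)
          linarith
        _ = _ := by ring
  refine ⟨?_, ?_, ?_⟩
  · have := gen ‖kk τ x z‖ 1 (norm_nonneg _) zero_le_one (by simpa using (h0 x k z).1)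
      (fun i => by simpa using (h i x k z).1)
    simpa using this
  · exact gen _ _ (norm_nonneg _) (norm_nonneg _) (h0 x k z).2.1 (fun i => (h i x k z).2.1)
  · exact gen _ _ (norm_nonneg _) (by positivity) (h0 x k z).2.2 (fun i => (h i x k z).2.2)

lemma continuous_kk (τ : 𝓢((Fin n → ℝ) × (Fin n → ℝ), ℂ)) :
    Continuous fun p : (Fin n → ℝ) × (Fin n → ℝ) => kk τ p.1 p.2 := by
  obtain ⟨C, hC, h⟩ := schw_bound' τ
  unfold kk
  refine continuous_of_dominated (bound := fun ξ => C * wgt ξ) (fun p => by fun_prop) (fun p => ?_)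
    (integrable_wgt.const_mul C) (Filter.Eventually.of_forall fun ξ => by fun_prop)
  refine Filter.Eventually.of_forall fun ξ => ?_
  rw [norm_mul, norm_expi, mul_one]
  exact h _ ξ

lemma wgt_le_one (ξ : Fin n → ℝ) : wgt ξ ≤ 1 := by
  unfold wgt
  apply inv_le_one_of_one_le₀
  apply one_le_pow₀
  linarith [norm_nonneg ξ]

lemma a_diff (a : 𝓢(Fin n → ℝ, ℂ)) :
    ∃ C ≥ 0, ∀ v w, ‖a v - a (v - w)‖ ≤ C * ‖w‖ * (1 + ‖w‖) ^ (n + 1) * wgt v := by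
  obtain ⟨C, hC, h⟩ := schw_bound (SchwartzMap.fderivCLM ℝ _ _ a) (n + 1)
  refine ⟨C, hC, fun v w => ?_⟩
  have key := Convex.norm_image_sub_le_of_norm_hasFDerivWithin_le (𝕜 := ℝ)
    (f := a) (s := Metric.closedBall v ‖w‖) (f' := fun u => fderiv ℝ a u)
    (C := C * (1 + ‖w‖) ^ (n + 1) * wgt v) (x := v - w) (y := v)
    (fun u _ => a.differentiableAt.hasFDerivAt.hasFDerivWithinAt) (fun u hu => ?_)
    (convex_closedBall _ _) (by simp) (by simp)
  · rw [sub_sub_cancel] at key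
    linarith
  · have h1 := h u
    rw [SchwartzMap.fderivCLM_apply] at h1
    have h2 : 1 + ‖v‖ ≤ (1 + ‖u‖) * (1 + ‖w‖) := by
      rw [mem_closedBall_iff_norm'] at hu
      have : ‖v‖ ≤ ‖v - u‖ + ‖u‖ := by simpa using norm_add_le (v - u) u
      nlinarith [norm_nonneg u, norm_nonneg w]
    have h3 : (1 + ‖v‖) ^ (n + 1) ≤ (1 + ‖u‖) ^ (n + 1) * (1 + ‖w‖) ^ (n + 1) := by
      rw [← mul_pow]; gcongr
    unfold wgt
    rw [← div_eq_mul_inv, le_div_iff₀ (by positivity)]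
    calc ‖fderiv ℝ a u‖ * (1 + ‖v‖) ^ (n + 1)
        ≤ ‖fderiv ℝ a u‖ * ((1 + ‖u‖) ^ (n + 1) * (1 + ‖w‖) ^ (n + 1)) := by gcongr
      _ = ((1 + ‖u‖) ^ (n + 1) * ‖fderiv ℝ a u‖) * (1 + ‖w‖) ^ (n + 1) := by ring
      _ ≤ _ := by gcongr

lemma a_diff_sq (a : 𝓢(Fin n → ℝ, ℂ)) :
    ∃ A ≥ 0, ∀ w, ∫ v, ‖a v - a (v - w)‖ ^ 2 ≤ A * ‖w‖ ^ 2 * (1 + ‖w‖) ^ (2 * n + 2) := by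
  obtain ⟨C, hC, h⟩ := a_diff a
  have hI : 0 ≤ ∫ ξ : Fin n → ℝ, wgt ξ := integral_nonneg fun x => (wgt_pos x).le
  refine ⟨C ^ 2 * ∫ ξ : Fin n → ℝ, wgt ξ, by positivity, fun w => ?_⟩
  have : ∀ v, ‖a v - a (v - w)‖ ^ 2 ≤ C ^ 2 * ‖w‖ ^ 2 * (1 + ‖w‖) ^ (2 * n + 2) * wgt v := by
    intro v
    have hw := wgt_pos v
    have hw1 := wgt_le_one v
    calc ‖a v - a (v - w)‖ ^ 2 ≤ (C * ‖w‖ * (1 + ‖w‖) ^ (n + 1) * wgt v) ^ 2 := by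
          gcongr; exact h v w
      _ = C ^ 2 * ‖w‖ ^ 2 * (1 + ‖w‖) ^ (2 * n + 2) * (wgt v * wgt v) := by ring
      _ ≤ C ^ 2 * ‖w‖ ^ 2 * (1 + ‖w‖) ^ (2 * n + 2) * (1 * wgt v) := by gcongr
      _ = _ := by ring
  calc ∫ v, ‖a v - a (v - w)‖ ^ 2
      ≤ ∫ v, C ^ 2 * ‖w‖ ^ 2 * (1 + ‖w‖) ^ (2 * n + 2) * wgt v := by
        refine integral_mono_of_nonneg (Filter.Eventually.of_forall fun v => by positivity)
          (integrable_wgt.const_mul _) (Filter.Eventually.of_forall this)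
    _ = _ := by rw [integral_const_mul]; ring

lemma schw_bdd {V F : Type*} [NormedAddCommGroup V] [NormedSpace ℝ V] [NormedAddCommGroup F]
    [NormedSpace ℝ F] (T : 𝓢(V, F)) : ∃ C ≥ 0, ∀ p, ‖T p‖ ≤ C := by
  simpa using schw_bound T 0

lemma D_abs (a : 𝓢(Fin n → ℝ, ℂ))
    (hreal : ∀ x, (a x).im = 0) (heven : ∀ x, a (-x) = a x)
    (ha : (∫ y, ‖a y‖ ^ 2) = 1) :
    ∃ A ≥ 0, ∀ (K : (Fin n → ℝ) → ℂ) (c : ℝ), Continuous K →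
      (∀ x h, ‖K x‖ ≤ c ∧ ‖K (x + h) - K x‖ ≤ c * ‖h‖ ∧
        ‖K (x + h) + K (x - h) - 2 * K x‖ ≤ c * ‖h‖ ^ 2) →
      ∀ s : ℝ, 0 ≤ s → s ≤ 1 → ∀ x z, 
      ‖K x - ∫ v, K (x - s • v) * (a v * a (v - s • z))‖
        ≤ c * s ^ 2 * (A * (1 + ‖z‖) ^ (2 * n + 4)) := by
  obtain ⟨A, hA, hdiff⟩ := a_diff_sq a
  obtain ⟨Ca, hCa, hab⟩ := schw_bdd a
  have hsq : ∀ v, a v * a v = ((‖a v‖ ^ 2 : ℝ) : ℂ) := by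
    intro v
    have : a v = ((a v).re : ℂ) := by apply Complex.ext <;> simp [hreal]
    rw [this]
    simp [← sq, ← Complex.ofReal_pow]
  have hm2i : Integrable fun v => ‖v‖ ^ 2 * ‖a v‖ ^ 2 := by
    refine ((a.integrable_pow_mul volume 2).const_mul Ca).mono' (by fun_prop)
      (Filter.Eventually.of_forall fun v => ?_)
    rw [Real.norm_of_nonneg (by positivity)]
    have := hab v
    calc ‖v‖ ^ 2 * ‖a v‖ ^ 2 = ‖a v‖ * (‖v‖ ^ 2 * ‖a v‖) := by ring
      _ ≤ _ := by gcongr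
  set m2 := ∫ v, ‖v‖ ^ 2 * ‖a v‖ ^ 2 with hm2
  have hm2n : 0 ≤ m2 := integral_nonneg fun v => by positivity
  refine ⟨m2 + 1 + A, by positivity, fun K c hK hb s hs0 hs1 x z => ?_⟩
  have hc : 0 ≤ c := (norm_nonneg _).trans (hb 0 0).1
  -- integrability helper
  have hint : ∀ (x : Fin n → ℝ) (p q : (Fin n → ℝ) → ℂ) (B : ℝ), Integrable p → Continuous q →
      (∀ v, ‖q v‖ ≤ B) → Integrable fun v => K (x - s • v) * (p v * q v) := by
    intro x p q B hp hq hB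
    refine (hp.mul_bdd (c := B) hq.aestronglyMeasurable
      (Filter.Eventually.of_forall hB)).bdd_mul (c := c)
      (by fun_prop) (Filter.Eventually.of_forall fun v => (hb _ 0).1)
  have hJi : ∀ x, Integrable fun v => K (x - s • v) * (a v * a v) := fun x =>
    hint x a a Ca a.integrable a.continuous hab
  have haa : Integrable fun v => a v * a v :=
    a.integrable.mul_bdd (c := Ca) a.continuous.aestronglyMeasurable
      (Filter.Eventually.of_forall hab)
  have hone : ∫ v, a v * a v = 1 := by
    simp_rw [hsq]
    rw [integral_complex_ofReal, ha]; simp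
  -- J
  have hJ : ∀ x, ‖(∫ v, K (x - s • v) * (a v * a v)) - K x‖ ≤ c * s ^ 2 * m2 / 2 := by
    intro x
    have e1 : ∫ v, K (x - s • v) * (a v * a v) = ∫ v, K (x + s • v) * (a v * a v) := by
      rw [← integral_neg_eq_self]
      congr 1; funext v
      rw [heven, smul_neg, sub_neg_eq_add]
    have hJi' : Integrable fun v => K (x + s • v) * (a v * a v) := by
      have := (hJi x).comp_neg
      refine this.congr (Filter.Eventually.of_forall fun v => ?_)
      simp only
      rw [heven, smul_neg, sub_neg_eq_add]
    have e2 : 2 * ((∫ v, K (x - s • v) * (a v * a v)) - K x)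
        = ∫ v, (K (x + s • v) + K (x - s • v) - 2 * K x) * (a v * a v) := by
      have : ∀ v, (K (x + s • v) + K (x - s • v) - 2 * K x) * (a v * a v)
        = K (x + s • v) * (a v * a v) + K (x - s • v) * (a v * a v)
          - 2 * K x * (a v * a v) := fun v => by ring
      simp_rw [this]
      rw [integral_sub (by exact hJi'.add (hJi x)) (haa.const_mul _),
        integral_add hJi' (hJi x), integral_const_mul, hone, ← e1]
      ring
    have e3 : ‖∫ v, (K (x + s • v) + K (x - s • v) - 2 * K x) * (a v * a v)‖
        ≤ ∫ v, c * s ^ 2 * (‖v‖ ^ 2 * ‖a v‖ ^ 2) := by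
      refine norm_integral_le_of_norm_le (hm2i.const_mul _)
        (Filter.Eventually.of_forall fun v => ?_)
      rw [norm_mul, norm_mul]
      have := (hb x (s • v)).2.2
      rw [norm_smul, Real.norm_of_nonneg hs0] at this
      calc _ ≤ c * (s * ‖v‖) ^ 2 * (‖a v‖ * ‖a v‖) := by gcongr
        _ = _ := by ring
    rw [integral_const_mul, ← e2, norm_mul] at e3
    simp only [Complex.norm_ofNat] at e3
    linarith
  have hI2 : ∫ v, K (x - s • v) * (a (v - s • z) * a (v - s • z))
      = ∫ v, K ((x - s ^ 2 • z) - s • v) * (a v * a v) := by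
    rw [← integral_add_right_eq_self _ (s • z)]
    congr 1; funext v
    rw [add_sub_cancel_right, smul_add, smul_smul, ← sq, sub_sub, add_comm (s ^ 2 • z)]
  have hi2 : Integrable fun v => K (x - s • v) * (a (v - s • z) * a (v - s • z)) :=
    hint x (fun v => a (v - s • z)) (fun v => a (v - s • z)) Ca (a.integrable.comp_sub_right _)
      (by fun_prop) (fun v => hab _)
  have hi3 : Integrable fun v => K (x - s • v) * ((a v - a (v - s • z)) * (a v - a (v - s • z))) :=
    hint x (fun v => a v - a (v - s • z)) (fun v => a v - a (v - s • z)) (Ca + Ca)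
      (a.integrable.sub (a.integrable.comp_sub_right _))
      (by fun_prop) (fun v => (norm_sub_le _ _).trans (add_le_add (hab _) (hab _)))
  have hsplit : ∫ v, K (x - s • v) * (a v * a (v - s • z))
      = ((∫ v, K (x - s • v) * (a v * a v))
        + (∫ v, K (x - s • v) * (a (v - s • z) * a (v - s • z)))
        - ∫ v, K (x - s • v) * ((a v - a (v - s • z)) * (a v - a (v - s • z)))) / 2 := by
    rw [← integral_add (hJi x) hi2, ← integral_sub (by exact (hJi x).add hi2) hi3,
      ← integral_div]
    congr 1; funext v
    ring
  have hI3 : ‖∫ v, K (x - s • v) * ((a v - a (v - s • z)) * (a v - a (v - s • z)))‖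
      ≤ c * (A * ‖s • z‖ ^ 2 * (1 + ‖s • z‖) ^ (2 * n + 2)) := by
    have hi : Integrable fun v => ‖a v - a (v - s • z)‖ ^ 2 := by
      have := ((a.integrable (μ := volume)).sub (a.integrable.comp_sub_right (s • z))).norm.mul_bdd
        (c := Ca + Ca) (f := fun v => ‖a v - a (v - s • z)‖)
        (g := fun v => ‖a v - a (v - s • z)‖)
        (by fun_prop) (Filter.Eventually.of_forall fun v => by
          rw [norm_norm]
          exact (norm_sub_le _ _).trans (add_le_add (hab _) (hab _)))
      simpa only [sq] using this
    calc _ ≤ ∫ v, c * ‖a v - a (v - s • z)‖ ^ 2 := by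
          refine norm_integral_le_of_norm_le (hi.const_mul _)
            (Filter.Eventually.of_forall fun v => ?_)
          rw [norm_mul, norm_mul, ← sq]
          have := (hb (x - s • v) 0).1
          gcongr
      _ ≤ _ := by rw [integral_const_mul]; gcongr; exact hdiff _
  have hKx : ‖K (x - s ^ 2 • z) - K x‖ ≤ c * (s ^ 2 * ‖z‖) := by
    have := (hb x (-(s ^ 2 • z))).2.1
    rw [norm_neg, norm_smul, Real.norm_of_nonneg (by positivity), ← sub_eq_add_neg] at this
    exact this
  have hJ1 := hJ x
  have hJ2 := hJ (x - s ^ 2 • z)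
  rw [← hI2] at hJ2
  rw [hsplit]
  set I1 := ∫ v, K (x - s • v) * (a v * a v)
  set I2 := ∫ v, K (x - s • v) * (a (v - s • z) * a (v - s • z))
  set I3 := ∫ v, K (x - s • v) * ((a v - a (v - s • z)) * (a v - a (v - s • z)))
  have hfin : ‖K x - (I1 + I2 - I3) / 2‖ ≤ (‖I1 - K x‖ + (‖I2 - K (x - s ^ 2 • z)‖ +
      ‖K (x - s ^ 2 • z) - K x‖) + ‖I3‖) / 2 := by
    have : K x - (I1 + I2 - I3) / 2 = (I3 - (I1 - K x) -
      ((I2 - K (x - s ^ 2 • z)) + (K (x - s ^ 2 • z) - K x))) / 2 := by ring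
    rw [this, norm_div, Complex.norm_ofNat]
    have q1 := norm_sub_le (I3 - (I1 - K x))
      ((I2 - K (x - s ^ 2 • z)) + (K (x - s ^ 2 • z) - K x))
    have q2 := norm_sub_le I3 (I1 - K x)
    have q3 := norm_add_le (I2 - K (x - s ^ 2 • z)) (K (x - s ^ 2 • z) - K x)
    linarith
  have hI3' : ‖I3‖ ≤ c * s ^ 2 * (A * (1 + ‖z‖) ^ (2 * n + 4)) := by
    refine hI3.trans ?_
    rw [norm_smul, Real.norm_of_nonneg hs0]
    have : s * ‖z‖ ≤ ‖z‖ := mul_le_of_le_one_left (norm_nonneg _) hs1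
    calc c * (A * (s * ‖z‖) ^ 2 * (1 + s * ‖z‖) ^ (2 * n + 2))
        ≤ c * (A * (s * (1 + ‖z‖)) ^ 2 * (1 + ‖z‖) ^ (2 * n + 2)) := by gcongr; linarith
      _ = _ := by ring
  have hz1 : 1 ≤ (1 + ‖z‖) ^ (2 * n + 4) := one_le_pow₀ (by linarith [norm_nonneg z])
  have hz2 : ‖z‖ ≤ (1 + ‖z‖) ^ (2 * n + 4) :=
    le_trans (by linarith) (le_self_pow₀ (by linarith [norm_nonneg z]) (by omega))
  have hcs : 0 ≤ c * s ^ 2 := by positivity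
  have b1 : c * s ^ 2 * m2 ≤ c * s ^ 2 * (m2 * (1 + ‖z‖) ^ (2 * n + 4)) := by
    gcongr; exact le_mul_of_one_le_right hm2n hz1
  have b2 : c * (s ^ 2 * ‖z‖) ≤ c * s ^ 2 * (1 + ‖z‖) ^ (2 * n + 4) := by
    rw [← mul_assoc]; gcongr
  have b3 : 0 ≤ c * s ^ 2 * (m2 * (1 + ‖z‖) ^ (2 * n + 4)) := by positivity
  have b4 : 0 ≤ c * s ^ 2 * (A * (1 + ‖z‖) ^ (2 * n + 4)) := by positivity
  have b5 : 0 ≤ c * s ^ 2 * (1 + ‖z‖) ^ (2 * n + 4) := by positivity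
  have : c * s ^ 2 * ((m2 + 1 + A) * (1 + ‖z‖) ^ (2 * n + 4)) =
    c * s ^ 2 * (m2 * (1 + ‖z‖) ^ (2 * n + 4)) + c * s ^ 2 * (1 + ‖z‖) ^ (2 * n + 4) +
      c * s ^ 2 * (A * (1 + ‖z‖) ^ (2 * n + 4)) := by ring
  rw [this]
  linarith

lemma D_bound (a : 𝓢(Fin n → ℝ, ℂ))
    (hreal : ∀ x, (a x).im = 0) (heven : ∀ x, a (-x) = a x)
    (ha : (∫ y, ‖a y‖ ^ 2) = 1) (τ : 𝓢((Fin n → ℝ) × (Fin n → ℝ), ℂ)) :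
    ∃ C ≥ 0, ∀ s : ℝ, 0 ≤ s → s ≤ 1 → ∀ x z,
      ‖kk τ x z - ∫ v, kk τ (x - s • v) z * (a v * a (v - s • z))‖ ≤ C * s ^ 2 * wgt z := by
  obtain ⟨A, hA, h⟩ := D_abs a hreal heven ha
  obtain ⟨C, hC, hk⟩ := kk_bounds ((n + 1) + (2 * n + 4)) τ
  refine ⟨C * A, by positivity, fun s hs0 hs1 x z => ?_⟩
  have hp : 0 < (1 + ‖z‖) ^ ((n + 1) + (2 * n + 4)) := by positivity
  have := h (fun x => kk τ x z) (C / (1 + ‖z‖) ^ ((n + 1) + (2 * n + 4)))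
    ((continuous_kk τ).comp (by fun_prop : Continuous fun x : Fin n → ℝ => (x, z)))
    (fun x h => ?_) s hs0 hs1 x z
  · refine this.trans (le_of_eq ?_)
    rw [pow_add, wgt]
    field_simp
  · obtain ⟨h1, h2, h3⟩ := hk x h z
    refine ⟨?_, ?_, ?_⟩
    · rw [le_div_iff₀ hp]; linarith
    · rw [div_mul_eq_mul_div, le_div_iff₀ hp]; linarith
    · rw [div_mul_eq_mul_div, le_div_iff₀ hp]; linarith

lemma chg (F : (Fin n → ℝ) → ℂ) (x : Fin n → ℝ) {ε : ℝ} (hε : 0 < ε) :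
    ∫ y, F y = ((ε ^ n : ℝ) : ℂ) * ∫ z, F (x - ε • z) := by
  rw [Measure.integral_comp_smul_of_nonneg volume (fun u => F (x - u)) ε (hR := hε.le),
    integral_sub_left_eq_self]
  simp only [Module.finrank_fintype_fun_eq_card, Fintype.card_fin, Complex.real_smul]
  rw [← mul_assoc, ← Complex.ofReal_mul, mul_inv_cancel₀ (by positivity)]
  simp

lemma chg' (F : (Fin n → ℝ) → ℂ) {ε : ℝ} (hε : 0 < ε) :
    ((ε ^ n : ℝ) : ℂ) * ∫ z, F (ε • z) = ∫ y, F y := by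
  rw [Measure.integral_comp_smul_of_nonneg volume F ε (hR := hε.le)]
  simp only [Module.finrank_fintype_fun_eq_card, Fintype.card_fin, Complex.real_smul]
  rw [← mul_assoc, ← Complex.ofReal_mul, mul_inv_cancel₀ (by positivity)]
  simp

lemma fs (g : (Fin n → ℝ) → ℂ) (x ξ : Fin n → ℝ) {ε : ℝ} (hε : 0 < ε) :
    expi (dotp x ξ) * ∫ y, g y * expi (-(dotp y ξ))
      = ((ε ^ n : ℝ) : ℂ) * ∫ z, g (x - ε • z) * expi (dotp z (ε • ξ)) := by
  rw [chg _ x hε, mul_left_comm, ← integral_const_mul]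
  congr 2
  funext z
  have : dotp z (ε • ξ) = dotp x ξ + -(dotp (x - ε • z) ξ) := by
    simp only [dotp, Pi.sub_apply, Pi.smul_apply, smul_eq_mul]
    rw [← Finset.sum_neg_distrib, ← Finset.sum_add_distrib]
    exact Finset.sum_congr rfl fun i _ => by ring
  rw [this, expi_add]
  ring

lemma swap_lem (u g : (Fin n → ℝ) → ℂ) (hu : Integrable u) (hg : Integrable g) :
    ∫ η, u η * ∫ z, g z * expi (dotp z η) = ∫ z, g z * ∫ η, u η * expi (dotp z η) := by
  simp_rw [← integral_const_mul]
  rw [integral_integral_swap]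
  · congr 1; funext z; congr 1; funext η; ring
  · have h := (hu.mul_prod hg).mul_bdd (c := 1)
      (g := fun p : (Fin n → ℝ) × (Fin n → ℝ) => expi (dotp p.2 p.1))
      (Continuous.aestronglyMeasurable (by fun_prop))
      (Filter.Eventually.of_forall fun p => (norm_expi _).le)
    refine h.congr (Filter.Eventually.of_forall fun p => ?_)
    simp only [Function.uncurry]
    ring

lemma integrable_aff (f : 𝓢(Fin n → ℝ, ℂ)) (x : Fin n → ℝ) {ε : ℝ} (hε : 0 < ε) :
    Integrable fun z => f (x - ε • z) := by
  have h : Integrable fun u => f (x - u) := (f.integrable (μ := volume)).comp_sub_left x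
  exact h.comp_smul hε.ne'

lemma section_integrable (τ : 𝓢((Fin n → ℝ) × (Fin n → ℝ), ℂ)) (x : Fin n → ℝ) :
    Integrable fun ξ => τ (x, ξ) := by
  obtain ⟨C, hC, h⟩ := schw_bound' τ
  exact (integrable_wgt.const_mul C).mono' (by fun_prop)
    (Filter.Eventually.of_forall fun ξ => h x ξ)

lemma KN_eq (τ : 𝓢((Fin n → ℝ) × (Fin n → ℝ), ℂ)) (f : 𝓢(Fin n → ℝ, ℂ)) {ε : ℝ} (hε : 0 < ε)
    (x : Fin n → ℝ) :
    OpKN (fun x ξ => τ (x, ε • ξ)) f x = ∫ z, f (x - ε • z) * kk τ x z := by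
  unfold OpKN FT
  have h1 : ∀ ξ, expi (dotp x ξ) * τ (x, ε • ξ) * ∫ y, f y * expi (-(dotp y ξ))
      = ((ε ^ n : ℝ) : ℂ) * (fun η => τ (x, η) * ∫ z, f (x - ε • z) * expi (dotp z η)) (ε • ξ) := by
    intro ξ
    rw [mul_right_comm, fs f x ξ hε]
    ring
  simp_rw [h1]
  rw [integral_const_mul, chg' (fun η => τ (x, η) * ∫ z, f (x - ε • z) * expi (dotp z η)) hε,
    swap_lem _ _ (section_integrable τ x) (integrable_aff f x hε)]
  rfl

lemma schw_bound2 (τ : 𝓢((Fin n → ℝ) × (Fin n → ℝ), ℂ)) :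
    ∃ C ≥ 0, ∀ x ξ, ‖τ (x, ξ)‖ ≤ C * (wgt x * wgt ξ) := by
  obtain ⟨C, hC, h⟩ := schw_bound τ ((n + 1) + (n + 1))
  refine ⟨C, hC, fun x ξ => ?_⟩
  have h1 := h (x, ξ)
  unfold wgt
  rw [← mul_inv, ← div_eq_mul_inv, le_div_iff₀ (by positivity), mul_comm]
  refine le_trans ?_ h1
  rw [pow_add _ (n + 1) (n + 1)]
  have e1 : ‖x‖ ≤ ‖(x, ξ)‖ := le_max_left _ _
  have e2 : ‖ξ‖ ≤ ‖(x, ξ)‖ := le_max_right _ _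
  gcongr

lemma kk_bdd (τ : 𝓢((Fin n → ℝ) × (Fin n → ℝ), ℂ)) : ∃ C ≥ 0, ∀ x z, ‖kk τ x z‖ ≤ C := by
  obtain ⟨C, hC, h⟩ := kk_base τ
  exact ⟨C, hC, fun x z => (h x 0 z).1⟩

lemma wick_eq (a : 𝓢(Fin n → ℝ, ℂ)) (hreal : ∀ x, (a x).im = 0)
    (τ : 𝓢((Fin n → ℝ) × (Fin n → ℝ), ℂ)) (f : 𝓢(Fin n → ℝ, ℂ))
    {ε s r c : ℝ} (hs : 0 < s) (hε : ε = s ^ 2) (hr : r = s⁻¹) (hc : c ^ 2 * s ^ n = 1)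
    (y : Fin n → ℝ) :
    WickOp (fun x => (c : ℂ) * a (r • x)) (fun x ξ => τ (x, ε • ξ)) f y
      = ∫ z, f (y - ε • z) * ∫ v, kk τ (y - s • v) z * (a v * a (v - s • z)) := by
  have hε0 : 0 < ε := by rw [hε]; positivity
  obtain ⟨Ca, hCa, hab⟩ := schw_bdd a
  obtain ⟨Ck, hCk, hkb⟩ := kk_bdd τ
  set b : (Fin n → ℝ) → ℂ := fun x => (c : ℂ) * a (r • x) with hb
  have hbc : Continuous b := by rw [hb]; fun_prop
  have hbb : ∀ x, ‖b x‖ ≤ |c| * Ca := by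
    intro x
    rw [hb]
    simp only [norm_mul, Complex.norm_real, Real.norm_eq_abs]
    gcongr; exact hab _
  have hbconj : ∀ x, (starRingEnd ℂ) (b x) = b x := by
    intro x
    rw [Complex.conj_eq_iff_im, hb]
    simp [hreal]
  have hfi := integrable_aff f y hε0
  -- inner integral
  set L : (Fin n → ℝ) → (Fin n → ℝ) → ℂ := fun x' η =>
    ∫ z, f (y - ε • z) * b (y - ε • z - x') * expi (dotp z η) with hL
  have hgi : ∀ x', Integrable fun z => f (y - ε • z) * b (y - ε • z - x') := fun x' =>
    hfi.mul_bdd (c := |c| * Ca) (by fun_prop) (Filter.Eventually.of_forall fun z => hbb _)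
  have hLbound : ∀ x' η z, ‖f (y - ε • z) * b (y - ε • z - x') * expi (dotp z η)‖
      ≤ ‖f (y - ε • z)‖ * (|c| * Ca) := by
    intro x' η z
    rw [norm_mul, norm_mul, norm_expi, mul_one]
    gcongr; exact hbb _
  have hLc : Continuous fun p : (Fin n → ℝ) × (Fin n → ℝ) => L p.1 p.2 := by
    refine continuous_of_dominated (bound := fun z => ‖f (y - ε • z)‖ * (|c| * Ca))
      (fun p => by fun_prop) (fun p => Filter.Eventually.of_forall fun z => hLbound _ _ _)
      (hfi.norm.mul_const _) (Filter.Eventually.of_forall fun z => by fun_prop)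
  have hLb : ∀ x' η, ‖L x' η‖ ≤ ∫ z, ‖f (y - ε • z)‖ * (|c| * Ca) := fun x' η =>
    norm_integral_le_of_norm_le (hfi.norm.mul_const _)
      (Filter.Eventually.of_forall fun z => hLbound _ _ _)
  have h1 : ∀ p : (Fin n → ℝ) × (Fin n → ℝ),
      τ (p.1, ε • p.2) * Barg b f p.1 p.2 * (starRingEnd ℂ) (b (y - p.1)) * expi (dotp y p.2)
      = τ (p.1, ε • p.2) * ((((ε ^ n : ℝ) : ℂ) * b (y - p.1)) * L p.1 (ε • p.2)) := by
    intro p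
    have := fs (fun w => f w * b (w - p.1)) y p.2 hε0
    rw [hbconj]
    unfold Barg
    calc _ = τ (p.1, ε • p.2) * b (y - p.1) *
          (expi (dotp y p.2) * ∫ y, f y * b (y - p.1) * expi (-(dotp y p.2))) := by ring
      _ = _ := by rw [this]; ring
  have hτi : Integrable fun p : (Fin n → ℝ) × (Fin n → ℝ) => τ (p.1, ε • p.2) := by
    obtain ⟨C, hC, h⟩ := schw_bound2 τ
    have hw : Integrable fun ξ : Fin n → ℝ => wgt (ε • ξ) := integrable_wgt.comp_smul hε0.ne'
    exact ((integrable_wgt.mul_prod hw).const_mul C).mono' (by fun_prop)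
      (Filter.Eventually.of_forall fun p => h _ _)
  have hint : Integrable fun p : (Fin n → ℝ) × (Fin n → ℝ) =>
      τ (p.1, ε • p.2) * ((((ε ^ n : ℝ) : ℂ) * b (y - p.1)) * L p.1 (ε • p.2)) := by
    refine hτi.mul_bdd (c := ε ^ n * (|c| * Ca) * ∫ z, ‖f (y - ε • z)‖ * (|c| * Ca)) ?_ ?_
    · refine Continuous.aestronglyMeasurable ?_
      have : Continuous fun p : (Fin n → ℝ) × (Fin n → ℝ) => L p.1 (ε • p.2) :=
        hLc.comp (by fun_prop : Continuous fun p : (Fin n → ℝ) × (Fin n → ℝ) => (p.1, ε • p.2))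
      fun_prop
    · refine Filter.Eventually.of_forall fun p => ?_
      rw [norm_mul, norm_mul, Complex.norm_real, Real.norm_of_nonneg (by positivity)]
      have := hbb (y - p.1)
      have := hLb p.1 (ε • p.2)
      gcongr
  unfold WickOp
  simp_rw [h1]
  rw [Measure.volume_eq_prod, integral_prod _ hint]
  have h2 : ∀ x', ∫ ξ, τ (x', ε • ξ) * ((((ε ^ n : ℝ) : ℂ) * b (y - x')) * L x' (ε • ξ))
      = b (y - x') * ∫ z, f (y - ε • z) * b (y - ε • z - x') * kk τ x' z := by
    intro x'
    have e : ∀ ξ, τ (x', ε • ξ) * ((((ε ^ n : ℝ) : ℂ) * b (y - x')) * L x' (ε • ξ))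
      = (((ε ^ n : ℝ) : ℂ) * b (y - x')) * (fun η => τ (x', η) * L x' η) (ε • ξ) :=
      fun ξ => by simp only; ring
    simp_rw [e]
    rw [integral_const_mul, mul_right_comm, chg' (fun η => τ (x', η) * L x' η) hε0, hL, mul_comm]
    congr 1
    exact swap_lem _ _ (section_integrable τ x') (hgi x')
  simp only
  simp_rw [h2]
  rw [chg _ y hs]
  have hrs : r * s = 1 := by rw [hr]; field_simp
  have hrε : r * ε = s := by rw [hr, hε]; field_simp
  have e1 : ∀ v, b (y - (y - s • v)) = c * a v := by
    intro v
    simp only [hb, sub_sub_cancel, smul_smul, hrs, one_smul]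
  have e2 : ∀ v z, b (y - ε • z - (y - s • v)) = c * a (v - s • z) := by
    intro v z
    have : y - ε • z - (y - s • v) = s • v - ε • z := by abel
    simp only [hb, this, smul_sub, smul_smul, hrs, hrε, one_smul]
  simp_rw [e1, e2]
  have e3 : ∀ v, (c : ℂ) * a v * ∫ z, f (y - ε • z) * (c * a (v - s • z)) * kk τ (y - s • v) z
      = ((c ^ 2 : ℝ) : ℂ) * ∫ z, f (y - ε • z) * (kk τ (y - s • v) z * (a v * a (v - s • z))) := by
    intro v
    rw [← integral_const_mul, ← integral_const_mul]
    congr 1; funext z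
    push_cast; ring
  simp_rw [e3]
  rw [integral_const_mul, ← mul_assoc, ← Complex.ofReal_mul, mul_comm (s ^ n), hc,
    Complex.ofReal_one, one_mul]
  simp_rw [← integral_const_mul]
  rw [integral_integral_swap]
  have hk : Continuous fun p : (Fin n → ℝ) × (Fin n → ℝ) => kk τ (y - s • p.1) p.2 :=
    (continuous_kk τ).comp
      (by fun_prop : Continuous fun p : (Fin n → ℝ) × (Fin n → ℝ) => (y - s • p.1, p.2))
  have h := ((a.integrable (μ := volume)).mul_prod hfi).mul_bdd (c := Ck * Ca)
      (g := fun p : (Fin n → ℝ) × (Fin n → ℝ) => kk τ (y - s • p.1) p.2 * a (p.1 - s • p.2))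
      (by fun_prop) (Filter.Eventually.of_forall fun p => by
        rw [norm_mul]
        have := hkb (y - s • p.1) p.2
        have := hab (p.1 - s • p.2)
        gcongr)
  refine h.congr (Filter.Eventually.of_forall fun p => ?_)
  simp only [Function.uncurry]
  ring

lemma W_props (a : 𝓢(Fin n → ℝ, ℂ)) (τ : 𝓢((Fin n → ℝ) × (Fin n → ℝ), ℂ)) (s : ℝ)
    (y : Fin n → ℝ) :
    (Continuous fun z => ∫ v, kk τ (y - s • v) z * (a v * a (v - s • z))) ∧
    ∃ C, ∀ z, ‖∫ v, kk τ (y - s • v) z * (a v * a (v - s • z))‖ ≤ C := by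
  obtain ⟨Ca, hCa, hab⟩ := schw_bdd a
  obtain ⟨Ck, hCk, hkb⟩ := kk_bdd τ
  have hk : Continuous fun p : (Fin n → ℝ) × (Fin n → ℝ) => kk τ (y - s • p.1) p.2 :=
    (continuous_kk τ).comp
      (by fun_prop : Continuous fun p : (Fin n → ℝ) × (Fin n → ℝ) => (y - s • p.1, p.2))
  have hbd : ∀ z v, ‖kk τ (y - s • v) z * (a v * a (v - s • z))‖ ≤ Ck * (‖a v‖ * Ca) := by
    intro z v
    rw [norm_mul, norm_mul]
    have := hkb (y - s • v) z
    have := hab (v - s • z)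
    gcongr
  have hi : Integrable fun v => Ck * (‖a v‖ * Ca) := (a.integrable.norm.mul_const _).const_mul _
  have hk1 : ∀ z, Continuous fun v => kk τ (y - s • v) z := fun z =>
    hk.comp (by fun_prop : Continuous fun v : Fin n → ℝ => (v, z))
  have hk2 : ∀ v, Continuous fun z => kk τ (y - s • v) z := fun v =>
    hk.comp (by fun_prop : Continuous fun z : Fin n → ℝ => (v, z))
  refine ⟨?_, _, fun z => norm_integral_le_of_norm_le hi (Filter.Eventually.of_forall (hbd z))⟩
  refine continuous_of_dominated (bound := fun v => Ck * (‖a v‖ * Ca)) (fun z => ?_)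
    (fun z => Filter.Eventually.of_forall (hbd z)) hi (Filter.Eventually.of_forall fun v => ?_)
  · have := hk1 z
    fun_prop
  · have := hk2 v
    fun_prop

lemma cs_wgt (F : (Fin n → ℝ) → ℝ) (hF : Continuous F) (B : ℝ) (hB : ∀ z, ‖F z‖ ≤ B) :
    (∫ z, wgt z * F z) ^ 2 ≤ (∫ z : Fin n → ℝ, wgt z) * ∫ z, wgt z * F z ^ 2 := by
  have h1 : Integrable fun z => wgt z * F z :=
    integrable_wgt.mul_bdd (c := B) hF.aestronglyMeasurable (Filter.Eventually.of_forall hB)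
  have h2 : Integrable fun z => wgt z * F z ^ 2 := by
    refine integrable_wgt.mul_bdd (c := B ^ 2) (by fun_prop)
      (Filter.Eventually.of_forall fun z => ?_)
    rw [norm_pow]
    have := hB z
    gcongr
  have key : ∀ t : ℝ, 0 ≤ (∫ z : Fin n → ℝ, wgt z) * (t * t) + (-2 * ∫ z, wgt z * F z) * t
      + ∫ z, wgt z * F z ^ 2 := by
    intro t
    have : 0 ≤ ∫ z, wgt z * (F z - t) ^ 2 :=
      integral_nonneg fun z => mul_nonneg (wgt_pos z).le (sq_nonneg _)
    have e : ∀ z, wgt z * (F z - t) ^ 2 =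
        wgt z * (t * t) + (-2 * t) * (wgt z * F z) + wgt z * F z ^ 2 := fun z => by ring
    simp_rw [e] at this
    rw [integral_add (by exact (integrable_wgt.mul_const _).add (h1.const_mul _)) h2,
      integral_add (integrable_wgt.mul_const _) (h1.const_mul _), integral_mul_const,
      integral_const_mul] at this
    linarith
  have := discrim_le_zero key
  unfold discrim at this
  nlinarith

lemma final_est (f : 𝓢(Fin n → ℝ, ℂ)) {ε B : ℝ} (hε : 0 < ε) (hB : 0 ≤ B)
    (T : (Fin n → ℝ) → ℂ) (hT : ∀ x, ‖T x‖ ≤ B * ∫ z, wgt z * ‖f (x - ε • z)‖) :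
    Real.sqrt (∫ x, ‖T x‖ ^ 2) ≤ B * (∫ z : Fin n → ℝ, wgt z) * Real.sqrt (∫ x, ‖f x‖ ^ 2) := by
  obtain ⟨Cf, hCf, hfb⟩ := schw_bdd f
  set I := ∫ z : Fin n → ℝ, wgt z with hI
  have hI0 : 0 ≤ I := integral_nonneg fun x => (wgt_pos x).le
  have hf2 : Integrable fun x => ‖f x‖ ^ 2 := by
    have := (f.integrable (μ := volume)).norm.mul_bdd (c := Cf) (g := fun x => ‖f x‖)
      (by fun_prop) (Filter.Eventually.of_forall fun x => by rw [norm_norm]; exact hfb x)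
    simpa only [sq] using this
  have hwc : Continuous (wgt : (Fin n → ℝ) → ℝ) := by
    unfold wgt
    exact Continuous.inv₀ (by fun_prop) (fun x => by positivity)
  have hprod : Integrable (fun p : (Fin n → ℝ) × (Fin n → ℝ) => wgt p.2 * ‖f (p.1 - ε • p.2)‖ ^ 2)
      (volume.prod volume) := by
    rw [integrable_prod_iff' (by fun_prop)]
    refine ⟨Filter.Eventually.of_forall fun z =>
      (hf2.comp_sub_right (ε • z)).const_mul (wgt z), ?_⟩
    have : ∀ z : Fin n → ℝ, ∫ x, ‖wgt z * ‖f (x - ε • z)‖ ^ 2‖ = wgt z * ∫ x, ‖f x‖ ^ 2 := by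
      intro z
      rw [← integral_sub_right_eq_self (fun x => ‖f x‖ ^ 2) (ε • z), ← integral_const_mul]
      congr 1; funext x
      rw [Real.norm_of_nonneg]
      exact mul_nonneg (wgt_pos z).le (sq_nonneg _)
    simp only [this]
    exact integrable_wgt.mul_const _
  have hpt : ∀ x, ‖T x‖ ^ 2 ≤ B ^ 2 * I * ∫ z, wgt z * ‖f (x - ε • z)‖ ^ 2 := by
    intro x
    have h1 := cs_wgt (fun z => ‖f (x - ε • z)‖) (by fun_prop) Cf
      (fun z => by rw [norm_norm]; exact hfb _)
    calc ‖T x‖ ^ 2 ≤ (B * ∫ z, wgt z * ‖f (x - ε • z)‖) ^ 2 := by gcongr; exact hT x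
      _ = B ^ 2 * (∫ z, wgt z * ‖f (x - ε • z)‖) ^ 2 := by ring
      _ ≤ B ^ 2 * (I * ∫ z, wgt z * ‖f (x - ε • z)‖ ^ 2) := by gcongr
      _ = _ := by ring
  have hmain : ∫ x, ‖T x‖ ^ 2 ≤ (B * I) ^ 2 * ∫ x, ‖f x‖ ^ 2 := by
    calc ∫ x, ‖T x‖ ^ 2 ≤ ∫ x, B ^ 2 * I * ∫ z, wgt z * ‖f (x - ε • z)‖ ^ 2 :=
          integral_mono_of_nonneg (Filter.Eventually.of_forall fun x => by positivity)
            (hprod.integral_prod_left.const_mul _) (Filter.Eventually.of_forall hpt)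
      _ = B ^ 2 * I * ∫ x, ∫ z, wgt z * ‖f (x - ε • z)‖ ^ 2 := integral_const_mul _ _
      _ = B ^ 2 * I * ∫ z, ∫ x, wgt z * ‖f (x - ε • z)‖ ^ 2 := by
          rw [integral_integral_swap hprod]
      _ = B ^ 2 * I * ∫ z, wgt z * ∫ x, ‖f x‖ ^ 2 := by
          congr 2; funext z
          rw [integral_const_mul, integral_sub_right_eq_self (fun x => ‖f x‖ ^ 2) (ε • z)]
      _ = _ := by rw [integral_mul_const, ← hI]; ring
  calc Real.sqrt (∫ x, ‖T x‖ ^ 2) ≤ Real.sqrt ((B * I) ^ 2 * ∫ x, ‖f x‖ ^ 2) :=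
        Real.sqrt_le_sqrt hmain
    _ = _ := by rw [Real.sqrt_mul (by positivity), Real.sqrt_sq (by positivity)]

end WickKN


/-- semiclassical Kohn–Nirenberg and Wick quantizations differ by
`O(ε)` in `L²`-operator norm. -/
theorem semiclassical_wick_KN (n : ℕ) (hn : 1 ≤ n)
    (a : SchwartzMap (Fin n → ℝ) ℂ)
    (hreal : ∀ x, (a x).im = 0) (heven : ∀ x, a (-x) = a x)
    (ha : (∫ y, ‖a y‖ ^ 2) = 1)
    (σ : SchwartzMap ((Fin n → ℝ) × (Fin n → ℝ)) ℂ)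
    (K : Set (Fin n → ℝ)) (hK : IsCompact K)
    (hsupp : ∀ x ξ, x ∉ K → σ (x, ξ) = 0) :
    ∃ C > 0, ∀ ε : ℝ, 0 < ε → ε ≤ 1 → ∀ f : SchwartzMap (Fin n → ℝ) ℂ,
      Real.sqrt (∫ x, ‖OpKN (fun x ξ => σ (x, ε • ξ)) (⇑f) x
          - WickOp
              (fun x => ((ε ^ (-(n : ℝ) / 4) : ℝ) : ℂ) * a ((ε ^ (-(1 : ℝ) / 2) : ℝ) • x))
              (fun x ξ => σ (x, ε • ξ)) (⇑f) x‖ ^ 2)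
        ≤ C * ε * Real.sqrt (∫ x, ‖f x‖ ^ 2) := by
  obtain ⟨C, hC, hD⟩ := D_bound a hreal heven ha σ
  have hI0 : 0 ≤ ∫ z : Fin n → ℝ, wgt z := integral_nonneg fun x => (wgt_pos x).le
  refine ⟨C * (∫ z : Fin n → ℝ, wgt z) + 1, by positivity, fun ε hε hε1 f => ?_⟩
  have hs : 0 < Real.sqrt ε := Real.sqrt_pos.2 hε
  have hs1 : Real.sqrt ε ≤ 1 := Real.sqrt_le_one.2 hε1
  have hsq : ε = Real.sqrt ε ^ 2 := (Real.sq_sqrt hε.le).symm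
  have hr : ε ^ (-(1 : ℝ) / 2) = (Real.sqrt ε)⁻¹ := by
    rw [Real.sqrt_eq_rpow, ← Real.rpow_neg hε.le]; norm_num
  have hc : (ε ^ (-(n : ℝ) / 4)) ^ 2 * Real.sqrt ε ^ n = 1 := by
    rw [Real.sqrt_eq_rpow, ← Real.rpow_natCast, ← Real.rpow_natCast, ← Real.rpow_mul hε.le,
      ← Real.rpow_mul hε.le, ← Real.rpow_add hε]
    convert! Real.rpow_zero ε using 2
    push_cast; ring
  obtain ⟨Ck, hCk, hkb⟩ := kk_bdd σ
  have key := final_est f hε (B := C * ε) (by positivity)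
    (fun x => OpKN (fun x ξ => σ (x, ε • ξ)) (⇑f) x
          - WickOp
              (fun x => ((ε ^ (-(n : ℝ) / 4) : ℝ) : ℂ) * a ((ε ^ (-(1 : ℝ) / 2) : ℝ) • x))
              (fun x ξ => σ (x, ε • ξ)) (⇑f) x) (fun x => ?_)
  · refine key.trans ?_
    have h0 : 0 ≤ ε * Real.sqrt (∫ x, ‖f x‖ ^ 2) := by positivity
    nlinarith
  · obtain ⟨Cf, hCf, hfb⟩ := schw_bdd f
    obtain ⟨hWc, CW, hWb⟩ := W_props a σ (Real.sqrt ε) x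
    have hfi := integrable_aff f x hε
    have hkc : Continuous fun z => kk σ x z :=
      (continuous_kk σ).comp (by fun_prop : Continuous fun z : Fin n → ℝ => (x, z))
    rw [KN_eq σ f hε, wick_eq a hreal σ f hs hsq hr hc,
      ← integral_sub
        (hfi.mul_bdd (c := Ck) hkc.aestronglyMeasurable (Filter.Eventually.of_forall (hkb x)))
        (hfi.mul_bdd (c := CW) hWc.aestronglyMeasurable (Filter.Eventually.of_forall hWb)),
      ← integral_const_mul]
    refine norm_integral_le_of_norm_le ?_ (Filter.Eventually.of_forall fun z => ?_)
    · refine Integrable.const_mul (integrable_wgt.mul_bdd (c := Cf) ?_ ?_) _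
      · exact Continuous.aestronglyMeasurable (by fun_prop)
      · exact Filter.Eventually.of_forall fun z => by rw [norm_norm]; exact hfb _
    · rw [← mul_sub, norm_mul]
      have h1 := hD (Real.sqrt ε) hs.le hs1 x z
      rw [← hsq] at h1
      calc _ ≤ ‖f (x - ε • z)‖ * (C * ε * wgt z) := by gcongr
        _ = _ := by ring
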